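/- Let f_1,…,f_m ∈ MvPolynomial (Fin (k−1)) ℝ be nonzero polynomials, let P̃0 = {π' ∈ Δ̃_{k-1} : f_i(π') = 0 for i = 1,…,m}, and let P0 ⊆ Δ_{k-1} be the corresponding null hypothesis, with ∅ ≠ P0 ≠ Δ_{k-1}. Then there exists an NTUB test of P0 of sample size 2·min_i totalDegree(f_i), and there exists an SUB test of P0 of sample size 2·max_i totalDegree(f_i). -/

import Mathlib

open Finset

/-- The probability simplex on a finite index set `ι`. -/
def probSimplex (ι : Type) [Fintype ι] : Set (ι → ℝ) :=
  {π | (∀ i, 0 ≤ π i) ∧ ∑ i, π i = 1}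

/-- Count vectors of sample size `n`: functions `x : ι → ℕ` with `∑ i, x i = n`. -/
def countVecs (ι : Type) [Fintype ι] [DecidableEq ι] (n : ℕ) : Finset (ι → ℕ) :=
  (Fintype.piFinset fun _ : ι => Finset.range (n + 1)).filter fun x => ∑ i, x i = n

/-- A (randomized) test of sample size `n`: values in `[0,1]` on all count vectors. -/
def IsTest (ι : Type) [Fintype ι] [DecidableEq ι] (n : ℕ) (φ : (ι → ℕ) → ℝ) : Prop :=
  ∀ x ∈ countVecs ι n, 0 ≤ φ x ∧ φ x ≤ 1

/-- The power function of a test. -/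
noncomputable def powerFn (ι : Type) [Fintype ι] [DecidableEq ι] (n : ℕ)
    (φ : (ι → ℕ) → ℝ) (π : ι → ℝ) : ℝ :=
  ∑ x ∈ countVecs ι n, φ x * (Nat.multinomial Finset.univ x : ℝ) * ∏ i, π i ^ x i

/-- Unbiasedness relative to the null hypothesis `P0`. -/
def Unbiased (ι : Type) [Fintype ι] [DecidableEq ι] (n : ℕ) (P0 : Set (ι → ℝ))
    (φ : (ι → ℕ) → ℝ) : Prop :=
  ∀ π0 ∈ P0, ∀ πA ∈ probSimplex ι \ P0, powerFn ι n φ π0 ≤ powerFn ι n φ πA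

/-- Non-trivial unbiased test: unbiased with non-constant power on the simplex. -/
def IsNTUB (ι : Type) [Fintype ι] [DecidableEq ι] (n : ℕ) (P0 : Set (ι → ℝ))
    (φ : (ι → ℕ) → ℝ) : Prop :=
  Unbiased ι n P0 φ ∧
    ∃ π ∈ probSimplex ι, ∃ π' ∈ probSimplex ι, powerFn ι n φ π ≠ powerFn ι n φ π'

/-- Strictly unbiased test. -/
def IsSUB (ι : Type) [Fintype ι] [DecidableEq ι] (n : ℕ) (P0 : Set (ι → ℝ))
    (φ : (ι → ℕ) → ℝ) : Prop :=
  ∀ π0 ∈ P0, ∀ πA ∈ probSimplex ι \ P0, powerFn ι n φ π0 < powerFn ι n φ πA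

/-- Level-`α` test. -/
def IsLevel (ι : Type) [Fintype ι] [DecidableEq ι] (n : ℕ) (P0 : Set (ι → ℝ)) (α : ℝ)
    (φ : (ι → ℕ) → ℝ) : Prop :=
  ∀ π ∈ P0, powerFn ι n φ π ≤ α

/-- A test has size `α` if the supremum of its power over `P0` is `α`. -/
def HasSize (ι : Type) [Fintype ι] [DecidableEq ι] (n : ℕ) (P0 : Set (ι → ℝ)) (α : ℝ)
    (φ : (ι → ℕ) → ℝ) : Prop :=
  IsLUB (powerFn ι n φ '' P0) α

/-- Uniformly most powerful unbiased level-`α` test. -/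
def IsUMPU (ι : Type) [Fintype ι] [DecidableEq ι] (n : ℕ) (P0 : Set (ι → ℝ)) (α : ℝ)
    (φ : (ι → ℕ) → ℝ) : Prop :=
  IsLevel ι n P0 α φ ∧ Unbiased ι n P0 φ ∧
    ∀ ψ, IsTest ι n ψ → IsLevel ι n P0 α ψ → Unbiased ι n P0 ψ →
      ∀ πA ∈ probSimplex ι \ P0, powerFn ι n ψ πA ≤ powerFn ι n φ πA

/-- The projected simplex in `ℝ^(k-1)`. -/
def projSimplex (k : ℕ) : Set (Fin (k - 1) → ℝ) :=
  {π' | (∀ i, 0 ≤ π' i) ∧ ∑ i, π' i ≤ 1}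

/-- Identify `π' ∈ Δ̃_{k-1}` with `(π'_1, …, π'_{k-1}, 1 - ∑ i, π' i) ∈ Δ_{k-1}`. -/
def liftProj (k : ℕ) (π' : Fin (k - 1) → ℝ) : Fin k → ℝ :=
  fun i => if h : (i : ℕ) < k - 1 then π' ⟨(i : ℕ), h⟩ else 1 - ∑ j, π' j

/-- Projection of a point of `Δ_{k-1}` onto its first `k-1` coordinates. -/
def projPoint (k : ℕ) (π : Fin k → ℝ) : Fin (k - 1) → ℝ :=
  fun j => π (Fin.castLE (Nat.sub_le k 1) j)

lemma countVecs_eq (ι : Type) [Fintype ι] [DecidableEq ι] (n : ℕ) :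
    countVecs ι n = Finset.piAntidiag Finset.univ n := by
  ext x
  simp only [countVecs, Finset.mem_filter, Fintype.mem_piFinset, Finset.mem_range,
    Finset.mem_piAntidiag]
  constructor
  · rintro ⟨_, h⟩
    exact ⟨h, by simp⟩
  · rintro ⟨h, _⟩
    refine ⟨fun i => ?_, h⟩
    have : x i ≤ ∑ i, x i := Finset.single_le_sum (fun _ _ => Nat.zero_le _) (Finset.mem_univ i)
    have h' : ∑ i, x i = n := h
    exact Nat.lt_succ_of_le (this.trans h'.le)

lemma powerFn_affine (ι : Type) [Fintype ι] [DecidableEq ι] (n : ℕ) (c : (ι → ℕ) → ℝ) (a b : ℝ)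
    (π : ι → ℝ) (h : ∑ i, π i = 1) :
    powerFn ι n (fun x => b + a * c x) π = b + a * powerFn ι n c π := by
  have h1 : (∑ x ∈ countVecs ι n, (Nat.multinomial Finset.univ x : ℝ) * ∏ i, π i ^ x i) = 1 := by
    rw [countVecs_eq, ← Finset.sum_pow_eq_sum_piAntidiag, h, one_pow]
  unfold powerFn
  have : ∀ x ∈ countVecs ι n, (b + a * c x) * (Nat.multinomial Finset.univ x : ℝ) * ∏ i, π i ^ x i
    = b * ((Nat.multinomial Finset.univ x : ℝ) * ∏ i, π i ^ x i) +
      a * (c x * (Nat.multinomial Finset.univ x : ℝ) * ∏ i, π i ^ x i) := by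
    intros; ring
  rw [Finset.sum_congr rfl this, Finset.sum_add_distrib, ← Finset.mul_sum, ← Finset.mul_sum, h1,
    mul_one]

lemma hom_rep (ι : Type) [Fintype ι] [DecidableEq ι] (n : ℕ) (H : MvPolynomial ι ℝ)
    (hH : H.IsHomogeneous n) : ∃ c : (ι → ℕ) → ℝ, ∀ π, MvPolynomial.eval π H = powerFn ι n c π := by
  refine ⟨fun x => MvPolynomial.coeff (Finsupp.equivFunOnFinite.symm x) H /
    (Nat.multinomial Finset.univ x : ℝ), fun π => ?_⟩
  rw [MvPolynomial.eval_eq']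
  unfold powerFn
  have hx : ∀ x : ι → ℕ, (Nat.multinomial Finset.univ x : ℝ) ≠ 0 := fun x =>
    Nat.cast_ne_zero.mpr (Nat.multinomial_pos _ _).ne'
  simp only [div_mul_cancel₀ _ (hx _)]
  have hmap := Finset.sum_map H.support Finsupp.equivFunOnFinite.toEmbedding
    (fun x => MvPolynomial.coeff (Finsupp.equivFunOnFinite.symm x) H * ∏ i, π i ^ x i)
  simp only [Equiv.coe_toEmbedding, Equiv.symm_apply_apply,
    Finsupp.equivFunOnFinite_apply] at hmap
  refine hmap.symm.trans ?_
  apply Finset.sum_subset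
  · intro x hx
    rw [Finset.mem_map] at hx
    obtain ⟨s, hs, rfl⟩ := hx
    rw [countVecs_eq, Finset.mem_piAntidiag]
    refine ⟨?_, by simp⟩
    have := hH (MvPolynomial.mem_support_iff.mp hs)
    rw [Finsupp.weight_apply, Finsupp.sum_fintype _ _ (by simp)] at this
    simpa using this
  · intro x _ hx
    have : MvPolynomial.coeff (Finsupp.equivFunOnFinite.symm x) H = 0 := by
      by_contra hc
      apply hx
      rw [Finset.mem_map]
      exact ⟨_, MvPolynomial.mem_support_iff.mpr hc, by simp⟩
    rw [this, zero_mul]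

lemma poly_rep (k n : ℕ) (p : MvPolynomial (Fin (k - 1)) ℝ) (hp : p.totalDegree ≤ n) :
    ∃ c : (Fin k → ℕ) → ℝ, ∀ π ∈ probSimplex (Fin k),
      MvPolynomial.eval (projPoint k π) p = powerFn (Fin k) n c π := by
  let e : Fin (k - 1) → Fin k := Fin.castLE (Nat.sub_le k 1)
  let H : MvPolynomial (Fin k) ℝ := ∑ s ∈ p.support,
    MvPolynomial.rename e (MvPolynomial.monomial s (MvPolynomial.coeff s p)) *
      (∑ i, MvPolynomial.X i) ^ (n - s.degree)
  have hH : H.IsHomogeneous n := by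
    apply MvPolynomial.IsHomogeneous.sum
    intro s hs
    have hle : s.degree ≤ n := (MvPolynomial.le_totalDegree hs).trans hp
    have h1 : (MvPolynomial.rename e (MvPolynomial.monomial s (MvPolynomial.coeff s p))).IsHomogeneous
      s.degree := (MvPolynomial.isHomogeneous_monomial _ rfl).rename_isHomogeneous
    have h2 : (∑ i, MvPolynomial.X i : MvPolynomial (Fin k) ℝ).IsHomogeneous 1 :=
      MvPolynomial.IsHomogeneous.sum _ _ _ fun i _ => MvPolynomial.isHomogeneous_X _ _
    have := h1.mul (h2.pow (n - s.degree))
    rwa [one_mul, Nat.add_sub_cancel' hle] at this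
  obtain ⟨c, hc⟩ := hom_rep _ n H hH
  refine ⟨c, fun π hπ => ?_⟩
  rw [← hc]
  conv_lhs => rw [p.as_sum]
  simp only [H, map_sum, map_mul, map_pow, MvPolynomial.eval_X, hπ.2, one_pow, mul_one,
    MvPolynomial.eval_rename]
  rfl

lemma exists_test (k n : ℕ) (p : MvPolynomial (Fin (k - 1)) ℝ) (hp : p.totalDegree ≤ n) :
    ∃ φ, IsTest (Fin k) n φ ∧ ∃ a : ℝ, 0 < a ∧ ∀ π ∈ probSimplex (Fin k),
      powerFn (Fin k) n φ π = 1 / 2 + a * MvPolynomial.eval (projPoint k π) p := by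
  obtain ⟨c, hc⟩ := poly_rep k n p hp
  let M : ℝ := 1 + ∑ x ∈ countVecs (Fin k) n, |c x|
  have hM0 : 0 ≤ ∑ x ∈ countVecs (Fin k) n, |c x| := Finset.sum_nonneg fun _ _ => abs_nonneg _
  have hM : 0 < M := by positivity
  refine ⟨fun x => 1 / 2 + (1 / (2 * M)) * c x, fun x hx => ?_, 1 / (2 * M), by positivity,
    fun π hπ => ?_⟩
  · have h1 : |c x| ≤ M := by
      have := Finset.single_le_sum (f := fun x => |c x|) (fun _ _ => abs_nonneg _) hx
      simp only [M]; linarith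
    have h2 := abs_le.mp h1
    have h3 : (1 / (2 * M)) * M = 1 / 2 := by field_simp
    have h4 : 0 < 1 / (2 * M) := by positivity
    constructor <;> nlinarith
  · rw [powerFn_affine _ _ _ _ _ _ hπ.2, hc π hπ]

lemma projPoint_liftProj (k : ℕ) (q : Fin (k - 1) → ℝ) : projPoint k (liftProj k q) = q := by
  ext j
  simp [projPoint, liftProj]

lemma liftProj_mem (k : ℕ) (hk : 2 ≤ k) (q) (hq : q ∈ projSimplex k) :
    liftProj k q ∈ probSimplex (Fin k) := by
  obtain ⟨k, rfl⟩ : ∃ l, k = l + 1 := ⟨k - 1, by omega⟩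
  refine ⟨fun i => ?_, ?_⟩
  · unfold liftProj
    split
    · exact hq.1 _
    · linarith [hq.2]
  · rw [Fin.sum_univ_castSucc]
    simp [liftProj]

lemma liftProj_projPoint (k : ℕ) (hk : 2 ≤ k) (π) (hπ : π ∈ probSimplex (Fin k)) :
    projPoint k π ∈ projSimplex k ∧ liftProj k (projPoint k π) = π := by
  obtain ⟨k, rfl⟩ : ∃ l, k = l + 1 := ⟨k - 1, by omega⟩
  have h := hπ.2
  rw [Fin.sum_univ_castSucc] at h
  have h' : ∑ j, projPoint (k + 1) π j = ∑ i : Fin k, π i.castSucc := rfl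
  refine ⟨⟨fun i => hπ.1 _, ?_⟩, ?_⟩
  · rw [h']; linarith [hπ.1 (Fin.last k)]
  · ext i
    refine Fin.lastCases ?_ (fun j => ?_) i
    · simp only [liftProj]
      rw [dif_neg (by simp), h']; linarith
    · simp [liftProj, projPoint]
      rfl

lemma exists_eval_ne_zero (k : ℕ) (hk : 2 ≤ k) (p : MvPolynomial (Fin (k - 1)) ℝ) (hp : p ≠ 0) :
    ∃ q ∈ projSimplex k, MvPolynomial.eval q p ≠ 0 := by
  by_contra! hcon
  apply hp
  have hk0 : (0 : ℝ) < 1 / k := by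
    have : (0 : ℝ) < k := by exact_mod_cast (by omega : 0 < k)
    positivity
  apply MvPolynomial.funext_set (fun _ => Set.Icc (0 : ℝ) (1 / k))
    (fun _ => Set.Icc_infinite hk0)
  intro x hx
  rw [map_zero]
  apply hcon
  have hx' : ∀ i, x i ∈ Set.Icc (0 : ℝ) (1 / k) := fun i => hx i (Set.mem_univ i)
  refine ⟨fun i => (hx' i).1, ?_⟩
  calc ∑ i, x i ≤ ∑ i : Fin (k - 1), (1 / k : ℝ) := Finset.sum_le_sum fun i _ => (hx' i).2
    _ = ((k - 1 : ℕ) : ℝ) * (1 / k) := by simp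
    _ ≤ (k : ℝ) * (1 / k) := by
      apply mul_le_mul_of_nonneg_right _ hk0.le
      exact_mod_cast Nat.sub_le k 1
    _ = 1 := by
      have : (k : ℝ) ≠ 0 := by exact_mod_cast (by omega : k ≠ 0)
      field_simp

/-- upper bounds for the unbiasedness thresholds via sums of squares:
an NTUB test exists at sample size `2·min_i deg f_i`, an SUB test at `2·max_i deg f_i`. -/
theorem stmt_10 (k m : ℕ) (hk : 2 ≤ k) (hm : 0 < m)
    (f : Fin m → MvPolynomial (Fin (k - 1)) ℝ) (hf : ∀ i, f i ≠ 0)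
    (dmin dmax : ℕ)
    (hdmin : IsLeast {d : ℕ | ∃ i, (f i).totalDegree = d} dmin)
    (hdmax : IsGreatest {d : ℕ | ∃ i, (f i).totalDegree = d} dmax)
    (Pt0 : Set (Fin (k - 1) → ℝ))
    (hPt0 : Pt0 = {π' ∈ projSimplex k | ∀ i, MvPolynomial.eval π' (f i) = 0})
    (P0 : Set (Fin k → ℝ)) (hP0 : P0 = liftProj k '' Pt0)
    (hne : P0.Nonempty) (hneq : P0 ≠ probSimplex (Fin k)) :
    (∃ φ, IsTest (Fin k) (2 * dmin) φ ∧ IsNTUB (Fin k) (2 * dmin) P0 φ) ∧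
    (∃ φ, IsTest (Fin k) (2 * dmax) φ ∧ IsSUB (Fin k) (2 * dmax) P0 φ) := by
  have hmem : ∀ π, π ∈ P0 ↔ π ∈ probSimplex (Fin k) ∧
      ∀ i, MvPolynomial.eval (projPoint k π) (f i) = 0 := by
    intro π
    subst hP0 hPt0
    constructor
    · rintro ⟨q, ⟨hq, hq0⟩, rfl⟩
      refine ⟨liftProj_mem k hk q hq, ?_⟩
      rwa [projPoint_liftProj]
    · rintro ⟨h1, h2⟩
      obtain ⟨h3, h4⟩ := liftProj_projPoint k hk π h1
      exact ⟨_, ⟨h3, h2⟩, h4⟩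
  constructor
  · obtain ⟨i, hi⟩ := hdmin.1
    obtain ⟨φ, hφ, a, ha, h⟩ := exists_test k (2 * dmin) (f i ^ 2)
      ((MvPolynomial.totalDegree_pow _ _).trans (by rw [hi]))
    refine ⟨φ, hφ, ?_, ?_⟩
    · intro π0 h0 πA hA
      rw [hmem] at h0
      rw [h _ h0.1, h _ hA.1, map_pow, map_pow, h0.2 i]
      have := mul_nonneg ha.le (sq_nonneg (MvPolynomial.eval (projPoint k πA) (f i)))
      simpa using this
    · obtain ⟨π0, h0⟩ := hne
      rw [hmem] at h0
      obtain ⟨q, hq, hq0⟩ := exists_eval_ne_zero k hk (f i) (hf i)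
      refine ⟨π0, h0.1, liftProj k q, liftProj_mem k hk q hq, ?_⟩
      rw [h _ h0.1, h _ (liftProj_mem k hk q hq), map_pow, map_pow, h0.2 i, projPoint_liftProj]
      have : 0 < a * (MvPolynomial.eval q (f i)) ^ 2 := by positivity
      intro h'
      simp at h'
      rcases h' with h' | h'
      · exact ha.ne' h'
      · exact hq0 h'
  · obtain ⟨φ, hφ, a, ha, h⟩ := exists_test k (2 * dmax) (∑ i, f i ^ 2)
      (MvPolynomial.totalDegree_finsetSum_le fun i _ =>
        (MvPolynomial.totalDegree_pow _ _).trans (Nat.mul_le_mul_left 2 (hdmax.2 ⟨i, rfl⟩)))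
    refine ⟨φ, hφ, ?_⟩
    intro π0 h0 πA hA
    rw [hmem] at h0
    have hA2 : ∃ i, MvPolynomial.eval (projPoint k πA) (f i) ≠ 0 := by
      by_contra! hcon
      exact hA.2 ((hmem _).2 ⟨hA.1, hcon⟩)
    obtain ⟨i, hi⟩ := hA2
    rw [h _ h0.1, h _ hA.1]
    simp only [map_sum, map_pow, h0.2]
    have hpos : 0 < ∑ i, (MvPolynomial.eval (projPoint k πA) (f i)) ^ 2 :=
      Finset.sum_pos' (fun _ _ => sq_nonneg _) ⟨i, Finset.mem_univ _, by positivity⟩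
    have := mul_pos ha hpos
    simpa using this
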